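/- arXiv:2508.18433 — 7 statements merged into one kernel-verified Lean document; each statement's English description precedes it below -/
import Mathlib

section
/- Let K be a field, g ≥ 1, let λ₁, …, λ_g ∈ K be pairwise distinct and μ₁, …, μ_g ∈ K. Set β(λ) := Π_{m=1}^{g}(λ−λ_m) and, for k ∈ [1, g], let β_{k−1}(λ) := [λ^{k−1−g}β(λ)]_{∞,+} be the polynomial part at infinity (if β(λ) = Σ_{i=0}^{g} b_iλ^{i} then β_{k−1}(λ) = Σ_{i=g+1−k}^{g} b_iλ^{i−(g+1−k)}). Then for every k ∈ [1, g]: Res_{λ→∞} [ λ^{−(g+1−k)} · Σ_{j=1}^{g} (μ_j/(λ−λ_j)) · Π_{m≠j}((λ−λ_m)/(λ_j−λ_m)) ] = −Σ_{j=1}^{g} μ_j·β'_{k−1}(λ_j) / Π_{i≠j}(λ_j−λ_i), where Res_{λ→∞}F(λ) := −(coefficient of λ^{−1} in the expansion of the rational function F in decreasing powers of λ), and β'_{k−1} is the formal derivative of the polynomial β_{k−1}. -/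
section Aux
open Polynomial
lemma aux_coeff {K : Type} [Field K] (n : ℕ) (Q : K[X]) (i : ℕ) : (divX^[n] Q).coeff i = Q.coeff (i+n) := by
  induction n generalizing Q with
  | zero => simp
  | succ n ih => rw [Function.iterate_succ_apply, ih, coeff_divX]; congr 1

lemma aux_geom {K : Type} [Field K] (a : K) :
   ((HahnSeries.single (1:ℤ) (1:K))⁻¹ - HahnSeries.C a)⁻¹ = HahnSeries.single (1:ℤ) (1:K) * ((PowerSeries.mk fun s => a^s : PowerSeries K) : LaurentSeries K) := by
  have h : (1 - PowerSeries.C a * PowerSeries.X) * (PowerSeries.mk fun s => a^s : PowerSeries K) = 1 := by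
    ext m
    rw [sub_mul, one_mul, mul_assoc, map_sub, PowerSeries.coeff_C_mul]
    cases m with
    | zero => simp
    | succ m => simp [PowerSeries.coeff_succ_X_mul, PowerSeries.coeff_one, pow_succ']
  have h2 := congrArg (fun x : PowerSeries K => (x : LaurentSeries K)) h
  simp only [PowerSeries.coe_mul, PowerSeries.coe_sub, PowerSeries.coe_one, PowerSeries.coe_C, PowerSeries.coe_X] at h2
  apply inv_eq_of_mul_eq_one_right
  rw [← mul_assoc, sub_mul, inv_mul_cancel₀ (by simp)]
  exact h2

lemma aux_res {K : Type} [Field K] (n : ℕ) (a : K) (Q : K[X]) :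
   ((HahnSeries.single (1:ℤ) (1:K))^n * (((HahnSeries.single (1:ℤ) (1:K))⁻¹ - HahnSeries.C a)⁻¹ * Q.eval₂ HahnSeries.C (HahnSeries.single (1:ℤ) (1:K))⁻¹)).coeff 1 = (divX^[n] Q).eval a := by
  induction Q using Polynomial.induction_on' with
  | add p q hp hq =>
    rw [eval₂_add, mul_add, mul_add, HahnSeries.coeff_add, hp, hq, ← eval_add]
    congr 1
    ext i
    simp [aux_coeff]
  | monomial i c =>
    have e : divX^[n] (monomial i c) = if n ≤ i then monomial (i-n) c else 0 := by
      ext m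
      rw [aux_coeff]
      split_ifs with h
      · simp only [coeff_monomial]
        congr 1
        apply propext; omega
      · rw [coeff_monomial, if_neg (by omega), coeff_zero]
    rw [aux_geom, eval₂_monomial, e]
    have e2 : (HahnSeries.single (1:ℤ) (1:K))^n * (HahnSeries.single (1:ℤ) (1:K) * ((PowerSeries.mk fun s => a^s : PowerSeries K) : LaurentSeries K) * (HahnSeries.C c * (HahnSeries.single (1:ℤ) (1:K))⁻¹ ^ i)) = HahnSeries.single ((n:ℤ) + 1 - i) c * ((PowerSeries.mk fun s => a^s : PowerSeries K) : LaurentSeries K) := by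
      have : HahnSeries.single ((n:ℤ) + 1 - i) c = (HahnSeries.single (1:ℤ) (1:K))^n * HahnSeries.single (1:ℤ) (1:K) * HahnSeries.C c * (HahnSeries.single (1:ℤ) (1:K))⁻¹ ^ i := by
        rw [HahnSeries.inv_single, HahnSeries.single_pow, HahnSeries.single_pow, HahnSeries.C_apply]
        simp only [HahnSeries.single_mul_single]
        congr 1
        · simp; ring
        · simp
      rw [this]; ring
    rw [e2, HahnSeries.coeff_single_mul, PowerSeries.coeff_coe]
    split_ifs with h1 h2 h2
    · omega
    · simp
    · rw [PowerSeries.coeff_mk, eval_monomial]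
      congr 2; omega
    · omega

lemma aux_der {K : Type} [Field K] (n : ℕ) (hn : 1 ≤ n) (a : K) (Q : K[X]) :
   (derivative (divX^[n] ((X - C a) * Q))).eval a = (divX^[n] Q).eval a := by
  have : divX^[n] ((X - C a) * Q) = (X - C a) * divX^[n] Q + C (Q.coeff (n-1)) := by
    obtain ⟨n, rfl⟩ : ∃ m, n = m+1 := ⟨n-1, by omega⟩
    ext i
    rw [aux_coeff, sub_mul, sub_mul, coeff_add, coeff_sub, coeff_sub, coeff_C_mul, coeff_C_mul, aux_coeff, ← add_assoc, coeff_X_mul]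
    cases i with
    | zero => simp; ring
    | succ i => 
      rw [coeff_X_mul, aux_coeff, coeff_C_succ]; simp [add_assoc, add_comm 1 n]
  rw [this]; simp

attribute [local instance] RatFunc.liftAlgebra in
lemma aux_coeC {K : Type} [Field K] (a : K) :
    ((RatFunc.C a : RatFunc K) : LaurentSeries K) = HahnSeries.C a := by
  simp [← RatFunc.algebraMap_C, ← IsScalarTower.algebraMap_apply K[X] (RatFunc K) (LaurentSeries K)]

lemma aux_part {K : Type} [Field K] (n g : ℕ) (β : K[X]) (h : β.natDegree ≤ g) :
    ∑ i ∈ Finset.Icc n g, C (β.coeff i) * X ^ (i - n) = divX^[n] β := by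
  ext m
  rw [aux_coeff, finsetSum_coeff]
  simp only [coeff_C_mul_X_pow]
  by_cases hm : m + n ≤ g
  · rw [Finset.sum_eq_single (m + n)]
    · simp
    · intro b hb hne
      rw [Finset.mem_Icc] at hb
      rw [if_neg (by omega)]
    · intro hb
      exact absurd (Finset.mem_Icc.2 ⟨by omega, hm⟩) hb
  · rw [coeff_eq_zero_of_natDegree_lt (by omega)]
    apply Finset.sum_eq_zero
    intro b hb
    rw [Finset.mem_Icc] at hb
    rw [if_neg (by omega)]

end Aux


/-- **Residue at infinity of the correction term (Lemma `LemmaEquality` ingredient).**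
For pairwise distinct `λ₁,…,λ_g` and arbitrary `μ₁,…,μ_g` in a field `K`, set
`β(λ) = Π(λ-λ_m)` and let `β_{k-1}` be the polynomial part of `λ^{k-1-g}β(λ)`
at infinity.  The residue at `λ = ∞` of
`λ^{-(g+1-k)} Σ_j μ_j/(λ-λ_j) Π_{m≠j}(λ-λ_m)/(λ_j-λ_m)` equals
`-Σ_j μ_j β'_{k-1}(λ_j)/Π_{i≠j}(λ_j-λ_i)`.  The residue at infinity is computed
by substituting `λ = t⁻¹` (so `Res_∞ F = -[t¹] F(t⁻¹)`, the Laurent expansion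
at `t = 0` being given by the coercion `RatFunc K → LaurentSeries K`). -/
theorem residue_at_infinity_correction_term
    (K : Type) [Field K] (g : ℕ) (hg : 1 ≤ g)
    (lam mu : Fin g → K) (hdist : Function.Injective lam)
    (k : ℕ) (hk1 : 1 ≤ k) (hkg : k ≤ g) :
    let β : Polynomial K := ∏ m : Fin g, (Polynomial.X - Polynomial.C (lam m))
    let βk : Polynomial K :=
      ∑ i ∈ Finset.Icc (g + 1 - k) g, Polynomial.C (β.coeff i) * Polynomial.X ^ (i - (g + 1 - k))
    let H : RatFunc K :=
      (RatFunc.X ^ (g + 1 - k) * ∑ j : Fin g,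
        RatFunc.C (mu j) / ((RatFunc.X)⁻¹ - RatFunc.C (lam j)) *
          ∏ m ∈ Finset.univ.erase j,
            ((RatFunc.X)⁻¹ - RatFunc.C (lam m)) / (RatFunc.C (lam j) - RatFunc.C (lam m)))
    (-((H : LaurentSeries K).coeff 1) : K)
      = -(∑ j : Fin g,
          mu j * (Polynomial.derivative βk).eval (lam j)
            / ∏ i ∈ Finset.univ.erase j, (lam j - lam i)) := by
  intro β βk H
  congr 1
  have hdeg : β.natDegree ≤ g := by
    simp [β, Polynomial.natDegree_prod_of_monic _ _ (fun m _ => Polynomial.monic_X_sub_C (lam m))]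
  have hβk : βk = Polynomial.divX^[g + 1 - k] β := aux_part _ _ _ hdeg
  have key : ∀ j, (Polynomial.derivative βk).eval (lam j) =
      (Polynomial.divX^[g + 1 - k] (∏ m ∈ Finset.univ.erase j,
        (Polynomial.X - Polynomial.C (lam m)))).eval (lam j) := by
    intro j
    rw [hβk, ← aux_der _ (by omega)]
    congr 4
    exact (Finset.mul_prod_erase _ _ (Finset.mem_univ j)).symm
  simp only [H, map_mul, map_pow, map_sum, map_prod, map_div₀, map_sub, map_inv₀, aux_coeC,
    RatFunc.coe_X, Finset.mul_sum, HahnSeries.coeff_sum]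
  apply Finset.sum_congr rfl
  intro j _
  rw [key, ← aux_res, Polynomial.eval₂_finsetProd]
  simp only [Polynomial.eval₂_sub, Polynomial.eval₂_X, Polynomial.eval₂_C]
  rw [Finset.prod_div_distrib, mul_div_right_comm, ← HahnSeries.coeff_single_zero_mul, ← HahnSeries.C_apply]
  congr 1
  simp only [map_div₀, map_prod, map_sub]
  ring
end

section
/- Let R be a commutative ring and α₁, β₁, γ₁, α₂, β₂, γ₂ ∈ R. In the 2×2 matrices over R set σ₃ := diag(1,−1), σ₊ := E₁₂, σ₋ := E₂₁, A₁ := α₁σ₃ + β₁σ₊ + γ₁σ₋, A₂ := α₂σ₃ + β₂σ₊ + γ₂σ₋, and let 𝒫 := E₁₁⊗E₁₁ + E₁₂⊗E₂₁ + E₂₁⊗E₁₂ + E₂₂⊗E₂₂ be the permutation operator in the Kronecker product. Then [A₁⊗I + I⊗A₂, 𝒫] = 2(α₁−α₂)(σ₊⊗σ₋ − σ₋⊗σ₊) + (β₁−β₂)(σ₃⊗σ₊ − σ₊⊗σ₃) − (γ₁−γ₂)(σ₃⊗σ₋ − σ₋⊗σ₃). -/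
/-- Kronecker product of two `2×2` matrices. -/
def kron {R : Type*} [CommRing R] (A B : Matrix (Fin 2) (Fin 2) R) :
    Matrix (Fin 2 × Fin 2) (Fin 2 × Fin 2) R :=
  Matrix.kroneckerMap (· * ·) A B

/-- The permutation operator `𝒫 = E₁₁⊗E₁₁ + E₁₂⊗E₂₁ + E₂₁⊗E₁₂ + E₂₂⊗E₂₂`. -/
def permP {R : Type*} [CommRing R] : Matrix (Fin 2 × Fin 2) (Fin 2 × Fin 2) R :=
  kron !![1, 0; 0, 0] !![1, 0; 0, 0] + kron !![0, 1; 0, 0] !![0, 0; 1, 0]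
    + kron !![0, 0; 1, 0] !![0, 1; 0, 0] + kron !![0, 0; 0, 1] !![0, 0; 0, 1]

/-- **The `r`-matrix part of the Mumford-system Poisson bracket:**
`[A₁⊗I + I⊗A₂, 𝒫] = 2(α₁-α₂)(σ₊⊗σ₋ - σ₋⊗σ₊) + (β₁-β₂)(σ₃⊗σ₊ - σ₊⊗σ₃)
  - (γ₁-γ₂)(σ₃⊗σ₋ - σ₋⊗σ₃)`. -/
theorem r_matrix_part_commutator (R : Type*) [CommRing R]
    (α1 β1 γ1 α2 β2 γ2 : R) :
    let σ3 : Matrix (Fin 2) (Fin 2) R := !![1, 0; 0, -1]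
    let σp : Matrix (Fin 2) (Fin 2) R := !![0, 1; 0, 0]
    let σm : Matrix (Fin 2) (Fin 2) R := !![0, 0; 1, 0]
    let A1 : Matrix (Fin 2) (Fin 2) R := α1 • σ3 + β1 • σp + γ1 • σm
    let A2 : Matrix (Fin 2) (Fin 2) R := α2 • σ3 + β2 • σp + γ2 • σm
    let X : Matrix (Fin 2 × Fin 2) (Fin 2 × Fin 2) R := kron A1 1 + kron 1 A2
    X * permP - permP * X
      = (2 * (α1 - α2)) • (kron σp σm - kron σm σp)
        + (β1 - β2) • (kron σ3 σp - kron σp σ3)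
        - (γ1 - γ2) • (kron σ3 σm - kron σm σ3) := by
  intro σ3 σp σm A1 A2 X
  ext ⟨i, j⟩ ⟨k, l⟩
  fin_cases i <;> fin_cases j <;> fin_cases k <;> fin_cases l <;>
    simp [X, A1, A2, σ3, σp, σm, kron, permP, Matrix.mul_apply, Fintype.sum_prod_type,
      Matrix.kroneckerMap_apply] <;> ring
end

section
/- Let K be a field, λ, μ ∈ K with λ ≠ μ, and α(λ), β(λ), γ(λ), α(μ), β(μ), γ(μ) ∈ K. In the 2×2 matrices over K set σ₃ := diag(1,−1), σ₊ := E₁₂, σ₋ := E₂₁, 𝒜(λ) := α(λ)σ₃ + β(λ)σ₊ + γ(λ)σ₋ and 𝒜(μ) := α(μ)σ₃ + β(μ)σ₊ + γ(μ)σ₋; let 𝒫 := E₁₁⊗E₁₁ + E₁₂⊗E₂₁ + E₂₁⊗E₁₂ + E₂₂⊗E₂₂ and Δ := σ₋⊗σ₋ in the Kronecker product. Then [𝒜(λ)⊗I + I⊗𝒜(μ), (λ−μ)⁻¹𝒫] + [𝒜(λ)⊗I − I⊗𝒜(μ), Δ] = −2(α(λ)−α(μ))·σ₋⊗σ₋ +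 2·((α(λ)−α(μ))/(λ−μ))·(σ₊⊗σ₋ − σ₋⊗σ₊) + ((β(λ)−β(μ))/(λ−μ))·(σ₃⊗σ₊ − σ₊⊗σ₃) − ((γ(λ)−γ(μ))/(λ−μ))·(σ₃⊗σ₋ − σ₋⊗σ₃) + β(λ)·σ₃⊗σ₋ − β(μ)·σ₋⊗σ₃. -/
set_option maxHeartbeats 4000000 in
/-- **Computation of the Mumford-system Poisson bracket (Proposition B.5):**
`[𝒜(λ)⊗I + I⊗𝒜(μ), 𝒫/(λ-μ)] + [𝒜(λ)⊗I - I⊗𝒜(μ), Δ]` equals the explicit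
right-hand side of Proposition `prop-B-a` of the paper. -/
theorem poisson_bracket_computation (K : Type*) [Field K]
    (lam mu : K) (hlm : lam ≠ mu)
    (αl βl γl αm βm γm : K) :
    let σ3 : Matrix (Fin 2) (Fin 2) K := !![1, 0; 0, -1]
    let σp : Matrix (Fin 2) (Fin 2) K := !![0, 1; 0, 0]
    let σm : Matrix (Fin 2) (Fin 2) K := !![0, 0; 1, 0]
    let Al : Matrix (Fin 2) (Fin 2) K := αl • σ3 + βl • σp + γl • σm
    let Am : Matrix (Fin 2) (Fin 2) K := αm • σ3 + βm • σp + γm • σm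
    let r : Matrix (Fin 2 × Fin 2) (Fin 2 × Fin 2) K := (lam - mu)⁻¹ • permP
    let Δ : Matrix (Fin 2 × Fin 2) (Fin 2 × Fin 2) K := kron σm σm
    let X : Matrix (Fin 2 × Fin 2) (Fin 2 × Fin 2) K := kron Al 1 + kron 1 Am
    let Y : Matrix (Fin 2 × Fin 2) (Fin 2 × Fin 2) K := kron Al 1 - kron 1 Am
    (X * r - r * X) + (Y * Δ - Δ * Y)
      = (-(2 * (αl - αm))) • kron σm σm
        + (2 * ((αl - αm) / (lam - mu))) • (kron σp σm - kron σm σp)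
        + ((βl - βm) / (lam - mu)) • (kron σ3 σp - kron σp σ3)
        - ((γl - γm) / (lam - mu)) • (kron σ3 σm - kron σm σ3)
        + βl • kron σ3 σm - βm • kron σm σ3 := by
  intro σ3 σp σm Al Am r Δ X Y
  ext ⟨i, j⟩ ⟨k, l⟩
  fin_cases i <;> fin_cases j <;> fin_cases k <;> fin_cases l <;>
    simp [σ3, σp, σm, Al, Am, r, Δ, X, Y, kron, permP, Matrix.mul_apply,
      Fintype.sum_prod_type, Fin.sum_univ_two, Matrix.one_apply] <;>
    try ring
end

section
/- Let K be a field, g ≥ 1, let q₁, …, q_g ∈ K be pairwise distinct, and let P₁, …, P_g ∈ K. Define Qᵢ := eᵢ(q₁, …, q_g) (the i-th elementary symmetric polynomial evaluated at the qⱼ, with Q₀ = 1) and, for i ∈ [1, g], pᵢ := Σ_{k=1}^{g} P_k · e_{k−1}({qⱼ : j ≠ i}) (so pᵢ = Σ_k P_k · ∂e_k/∂qᵢ evaluated at q). Then the Lagrange interpolation polynomial satisfies, as an identity in K[λ]: −Σ_{i=1}^{g} pᵢ · Π_{j≠i} (λ−qⱼ)/(qᵢ−qⱼ) = Σ_{j=0}^{g−1}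 (−1)^{j+1} · (Σ_{i=j+1}^{g} Pᵢ·Q_{i−j−1}) · λ^{j}. -/
/-- The `k`-th elementary symmetric polynomial of the family `v` over the
finite index set `s`:  `e_k = Σ_{i₁<⋯<i_k} v_{i₁}⋯v_{i_k}`. -/
noncomputable def esymmVal {ι K : Type*} [DecidableEq ι] [CommRing K]
    (s : Finset ι) (v : ι → K) (k : ℕ) : K :=
  ∑ t ∈ Finset.powersetCard k s, ∏ i ∈ t, v i

theorem esymmVal_succ_aux {ι K : Type*} [DecidableEq ι] [CommRing K]
    (s : Finset ι) (v : ι → K) (i : ι) (hi : i ∈ s) (k : ℕ) :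
    esymmVal s v (k + 1) = esymmVal (s.erase i) v (k + 1) + v i * esymmVal (s.erase i) v k := by
  have hn : i ∉ s.erase i := Finset.notMem_erase i s
  have hnot : ∀ t ∈ Finset.powersetCard k (s.erase i), i ∉ t := fun t ht h =>
    hn ((Finset.mem_powersetCard.1 ht).1 h)
  conv_lhs => rw [← Finset.insert_erase hi]
  unfold esymmVal
  rw [Finset.powersetCard_succ_insert hn, Finset.sum_union, Finset.sum_image, Finset.mul_sum]
  · congr 1
    exact Finset.sum_congr rfl fun t ht => Finset.prod_insert (hnot t ht)
  · intro a ha b hb hab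
    have := congrArg (fun t => Finset.erase t i) hab
    simpa [Finset.erase_insert (hnot a ha), Finset.erase_insert (hnot b hb)] using this
  · rw [Finset.disjoint_left]
    intro t ht ht'
    obtain ⟨u, _, rfl⟩ := Finset.mem_image.1 ht'
    exact hn ((Finset.mem_powersetCard.1 ht).1 (Finset.mem_insert_self i u))

theorem esymmVal_erase_aux {ι K : Type*} [DecidableEq ι] [CommRing K]
    (s : Finset ι) (v : ι → K) (i : ι) (hi : i ∈ s) (k : ℕ) :
    esymmVal (s.erase i) v k = ∑ j ∈ Finset.range (k + 1), (-v i) ^ j * esymmVal s v (k - j) := by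
  induction k with
  | zero => simp [esymmVal]
  | succ k ih =>
    rw [Finset.sum_range_succ']
    have h : ∀ j ∈ Finset.range (k + 1), (-v i) ^ (j + 1) * esymmVal s v (k + 1 - (j + 1))
        = (-v i) * ((-v i) ^ j * esymmVal s v (k - j)) := by
      intro j _
      rw [Nat.add_sub_add_right]; ring
    rw [Finset.sum_congr rfl h, ← Finset.mul_sum, ← ih, Nat.sub_zero, esymmVal_succ_aux s v i hi k]
    ring

/-- **The Lagrange polynomial in symmetric Darboux coordinates.**  With
`Qᵢ = eᵢ(q₁,…,q_g)` and `pᵢ = Σ_{k=1}^{g} P_k e_{k-1}({qⱼ : j ≠ i})`, the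
Lagrange interpolation polynomial `-Σᵢ pᵢ Π_{j≠i}(λ-qⱼ)/(qᵢ-qⱼ)` equals
`Σ_{j=0}^{g-1} (-1)^{j+1} (Σ_{i=j+1}^{g} Pᵢ Q_{i-j-1}) λ^j`. -/
theorem lagrange_polynomial_symmetric_coordinates
    (K : Type*) [Field K] (g : ℕ) (hg : 1 ≤ g)
    (q : Fin g → K) (hq : Function.Injective q) (P : ℕ → K) :
    (-∑ i : Fin g,
      Polynomial.C ((∑ k ∈ Finset.Icc 1 g, P k * esymmVal (Finset.univ.erase i) q (k - 1))
          / ∏ j ∈ Finset.univ.erase i, (q i - q j))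
        * ∏ j ∈ Finset.univ.erase i, (Polynomial.X - Polynomial.C (q j)))
      = ∑ j ∈ Finset.range g,
          Polynomial.C ((-1 : K) ^ (j + 1)
              * ∑ i ∈ Finset.Icc (j + 1) g, P i * esymmVal Finset.univ q (i - j - 1))
            * Polynomial.X ^ j := by
  have hinj : Set.InjOn q (Finset.univ : Finset (Fin g)) := hq.injOn
  refine Polynomial.eq_of_degrees_lt_of_eval_index_eq (s := Finset.univ) (v := q) hinj ?_ ?_ ?_
  · rw [Polynomial.degree_neg]
    refine (Polynomial.degree_sum_le _ _).trans_lt ?_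
    rw [Finset.sup_lt_iff (WithBot.bot_lt_coe _)]
    intro i _
    rw [← Polynomial.smul_eq_C_mul]
    refine (Polynomial.degree_smul_le _ _).trans_lt ?_
    rw [← Lagrange.nodal_eq, Lagrange.degree_nodal]
    exact_mod_cast Finset.card_erase_lt_of_mem (Finset.mem_univ i)
  · refine (Polynomial.degree_sum_le _ _).trans_lt ?_
    rw [Finset.sup_lt_iff (WithBot.bot_lt_coe _)]
    intro j hj
    refine (Polynomial.degree_C_mul_X_pow_le _ _).trans_lt ?_
    rw [Finset.card_univ, Fintype.card_fin]
    exact_mod_cast Finset.mem_range.1 hj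
  · intro i _
    have hne : ∏ j ∈ Finset.univ.erase i, (q i - q j) ≠ 0 := by
      refine Finset.prod_ne_zero_iff.2 fun j hj => sub_ne_zero.2 fun h => ?_
      exact (Finset.ne_of_mem_erase hj) (hq h).symm
    simp only [Polynomial.eval_neg, Polynomial.eval_finsetSum, Polynomial.eval_mul,
      Polynomial.eval_C, Polynomial.eval_prod, Polynomial.eval_sub, Polynomial.eval_X,
      Polynomial.eval_pow]
    rw [Finset.sum_eq_single i]
    · rw [div_mul_cancel₀ _ hne]
      simp_rw [Finset.mul_sum, Finset.sum_mul]
      rw [Finset.sum_comm' (t' := Finset.Icc 1 g) (s' := fun k => Finset.range k)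
        (by intro x y; simp only [Finset.mem_range, Finset.mem_Icc]; omega),
        ← Finset.sum_neg_distrib]
      refine Finset.sum_congr rfl fun k hk => ?_
      obtain ⟨m, rfl⟩ := Nat.exists_eq_add_of_le' (Finset.mem_Icc.1 hk).1
      rw [Nat.add_sub_cancel, esymmVal_erase_aux _ q i (Finset.mem_univ i), Finset.mul_sum,
        ← Finset.sum_neg_distrib]
      refine Finset.sum_congr rfl fun j _ => ?_
      rw [show m + 1 - j - 1 = m - j by omega, neg_pow (q i)]
      ring
    · intro b _ hb
      have h0 : ∏ j ∈ Finset.univ.erase b, (q i - q j) = 0 :=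
        Finset.prod_eq_zero (i := i) (Finset.mem_erase.2 ⟨hb.symm, Finset.mem_univ i⟩) (sub_self _)
      rw [h0, mul_zero]
    · intro h
      exact absurd (Finset.mem_univ i) h
end

section
/- Let K be a field, g ≥ 1, let q₁, …, q_g ∈ K be pairwise distinct, p₁, …, p_g ∈ K, and let ℓ(λ) ∈ K(λ) be any rational function. Set β(λ) := Π_{j=1}^{g}(λ−qⱼ), let Q(λ) := −Σ_{i=1}^{g} pᵢ·Π_{j≠i}(λ−qⱼ)/(qᵢ−qⱼ) be the Lagrange polynomial with Q(qᵢ) = −pᵢ, define the matrices over K(λ): G(λ) with rows (1, 0) and (−Q(λ), β(λ)), and L(λ) with rows (0, 1) and (ℓ(λ), Σ_{j=1}^{g} 1/(λ−qⱼ)). Then L̂(λ) := G(λ)⁻¹L(λ)G(λ) − G(λ)⁻¹·∂_λG(λ) has entries L̂₁₁ = −Q(λ), L̂₁₂ = β(λ), L̂₂₂ = Q(λ), and L̂₂₁ = ∂_λ(Q(λ)/β(λ)) + ℓ(λ)/β(λ) − Q(λ)²/β(λ). -/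
/-- The standard derivation `∂_λ` on rational functions, `(p/q)' = (p'q - pq')/q²`. -/
noncomputable def rfDeriv {K : Type*} [Field K] (f : RatFunc K) : RatFunc K :=
  (algebraMap (Polynomial K) (RatFunc K) (Polynomial.derivative f.num)
      * algebraMap (Polynomial K) (RatFunc K) f.denom
    - algebraMap (Polynomial K) (RatFunc K) f.num
      * algebraMap (Polynomial K) (RatFunc K) (Polynomial.derivative f.denom))
  / (algebraMap (Polynomial K) (RatFunc K) f.denom) ^ 2



open Polynomial in
theorem rfDeriv_div_aux {K : Type*} [Field K] (a b : K[X]) (hb : b ≠ 0) :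
    rfDeriv (algebraMap K[X] (RatFunc K) a / algebraMap K[X] (RatFunc K) b)
      = (algebraMap K[X] (RatFunc K) (derivative a) * algebraMap K[X] (RatFunc K) b
        - algebraMap K[X] (RatFunc K) a * algebraMap K[X] (RatFunc K) (derivative b))
        / (algebraMap K[X] (RatFunc K) b) ^ 2 := by
  have hb' : algebraMap K[X] (RatFunc K) b ≠ 0 := RatFunc.algebraMap_ne_zero hb
  unfold rfDeriv
  generalize hf : algebraMap K[X] (RatFunc K) a / algebraMap K[X] (RatFunc K) b = f
  have hD : algebraMap K[X] (RatFunc K) f.denom ≠ 0 :=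
    RatFunc.algebraMap_ne_zero f.denom_ne_zero
  have h1 : f.num * b = a * f.denom := by
    apply RatFunc.algebraMap_injective K
    have h := (RatFunc.num_div_denom f).trans hf.symm
    rw [div_eq_div_iff hD hb'] at h
    simpa using h
  have h2 := congrArg derivative h1
  rw [derivative_mul, derivative_mul] at h2
  rw [div_eq_div_iff (pow_ne_zero 2 hD) (pow_ne_zero 2 hb')]
  simp only [← map_mul, ← map_sub, ← map_pow]
  congr 1
  linear_combination (b * f.denom) * h2 - (b * derivative f.denom + f.denom * derivative b) * h1

open Polynomial in
theorem rfDeriv_algebraMap_aux {K : Type*} [Field K] (a : K[X]) :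
    rfDeriv (algebraMap K[X] (RatFunc K) a) = algebraMap K[X] (RatFunc K) (derivative a) := by
  have h := rfDeriv_div_aux a 1 one_ne_zero
  simpa using h

/-- **The geometric Lax matrix from the oper gauge (Proposition `hatLqp`).**
With `β(λ) = Π(λ-qⱼ)`, `Q` the Lagrange polynomial with `Q(qᵢ) = -pᵢ`,
`G = !![1, 0; -Q, β]` and the companion-like `L = !![0, 1; ℓ, Σⱼ 1/(λ-qⱼ)]`,
the matrix `L̂ = G⁻¹LG - G⁻¹ ∂_λG` has entries `L̂₁₁ = -Q`, `L̂₁₂ = β`,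
`L̂₂₂ = Q` and `L̂₂₁ = ∂_λ(Q/β) + ℓ/β - Q²/β`. -/
theorem geometric_lax_matrix_from_oper_gauge
    (K : Type*) [Field K] (g : ℕ) (hg : 1 ≤ g)
    (q : Fin g → K) (hq : Function.Injective q)
    (p : Fin g → K) (ℓ : RatFunc K) :
    let β : RatFunc K := ∏ j : Fin g, (RatFunc.X - RatFunc.C (q j))
    let Q : RatFunc K :=
      (-∑ i : Fin g, RatFunc.C (p i) * ∏ j ∈ Finset.univ.erase i,
        (RatFunc.X - RatFunc.C (q j)) / (RatFunc.C (q i) - RatFunc.C (q j)))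
    let G : Matrix (Fin 2) (Fin 2) (RatFunc K) := !![1, 0; -Q, β]
    let L : Matrix (Fin 2) (Fin 2) (RatFunc K) :=
      !![0, 1; ℓ, ∑ j : Fin g, 1 / (RatFunc.X - RatFunc.C (q j))]
    let Lhat : Matrix (Fin 2) (Fin 2) (RatFunc K) := G⁻¹ * L * G - G⁻¹ * (G.map rfDeriv)
    Lhat 0 0 = -Q ∧ Lhat 0 1 = β ∧ Lhat 1 1 = Q
      ∧ Lhat 1 0 = rfDeriv (Q / β) + ℓ / β - Q ^ 2 / β := by
  intro β Q G L Lhat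
  have hX : ∀ j, (RatFunc.X - RatFunc.C (q j) : RatFunc K)
      = algebraMap (Polynomial K) (RatFunc K) (Polynomial.X - Polynomial.C (q j)) := by
    intro j; simp
  have hXne : ∀ j, (RatFunc.X - RatFunc.C (q j) : RatFunc K) ≠ 0 := by
    intro j; rw [hX]; exact RatFunc.algebraMap_ne_zero (Polynomial.X_sub_C_ne_zero _)
  have hβ0 : β ≠ 0 := Finset.prod_ne_zero_iff.mpr fun j _ => hXne j
  obtain ⟨b, hb⟩ : ∃ b : Polynomial K, b = ∏ j : Fin g, (Polynomial.X - Polynomial.C (q j)) :=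
    ⟨_, rfl⟩
  have hβ : β = algebraMap (Polynomial K) (RatFunc K) b := by
    rw [hb, map_prod]; exact Finset.prod_congr rfl fun j _ => hX j
  obtain ⟨a, hQ⟩ : ∃ a : Polynomial K, Q = algebraMap (Polynomial K) (RatFunc K) a := by
    refine ⟨-∑ i : Fin g, Polynomial.C (p i) * ∏ j ∈ Finset.univ.erase i,
      ((Polynomial.X - Polynomial.C (q j)) * Polynomial.C ((q i - q j)⁻¹)), ?_⟩
    simp only [Q, map_neg, map_sum, map_mul, map_prod, hX, RatFunc.algebraMap_C, div_eq_mul_inv,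
      map_inv₀, map_sub]
  have hS : algebraMap (Polynomial K) (RatFunc K) (Polynomial.derivative b)
      = β * ∑ j : Fin g, 1 / (RatFunc.X - RatFunc.C (q j)) := by
    rw [hb, Polynomial.derivative_prod_finset, map_sum, Finset.mul_sum]
    refine Finset.sum_congr rfl fun j _ => ?_
    rw [mul_one_div, eq_div_iff (hXne j)]
    simp only [map_mul, map_prod, ← hX, Polynomial.derivative_X_sub_C, map_one, mul_one]
    exact Finset.prod_erase_mul _ _ (Finset.mem_univ j)
  have hb0 : b ≠ 0 := by
    rintro rfl; exact hβ0 (by rw [hβ, map_zero])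
  have hdβ : rfDeriv β = β * ∑ j : Fin g, 1 / (RatFunc.X - RatFunc.C (q j)) := by
    rw [← hS, hβ, rfDeriv_algebraMap_aux]
  have hdQ : rfDeriv (-Q) = - algebraMap (Polynomial K) (RatFunc K) (Polynomial.derivative a) := by
    rw [hQ, ← map_neg, rfDeriv_algebraMap_aux, Polynomial.derivative_neg, map_neg]
  have hd0 : rfDeriv (0 : RatFunc K) = 0 := by
    simpa using rfDeriv_algebraMap_aux (0 : Polynomial K)
  have hd1 : rfDeriv (1 : RatFunc K) = 0 := by
    simpa using rfDeriv_algebraMap_aux (1 : Polynomial K)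
  have hdiv : rfDeriv (Q / β)
      = (algebraMap (Polynomial K) (RatFunc K) (Polynomial.derivative a) * β
        - Q * (β * ∑ j : Fin g, 1 / (RatFunc.X - RatFunc.C (q j)))) / β ^ 2 := by
    rw [← hS, hQ, hβ, rfDeriv_div_aux a b hb0]
  have hGi : G⁻¹ = !![1, 0; Q / β, 1 / β] := by
    apply Matrix.inv_eq_left_inv
    ext i j
    fin_cases i <;> fin_cases j <;> simp [G, Matrix.mul_apply, Fin.sum_univ_two, hβ0] <;>
      field_simp <;> ring
  have hGd : G.map rfDeriv = !![0, 0; rfDeriv (-Q), rfDeriv β] := by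
    ext i j
    fin_cases i <;> fin_cases j <;> simp [G, hd0, hd1]
  have hL : Lhat = G⁻¹ * L * G - G⁻¹ * (G.map rfDeriv) := rfl
  rw [hGd, hGi, hdQ, hdβ] at hL
  rw [hL, hdiv]
  simp only [L, G]
  clear_value β Q
  generalize (∑ j : Fin g, 1 / (RatFunc.X - RatFunc.C (q j)) : RatFunc K) = S
  refine ⟨?_, ?_, ?_, ?_⟩ <;>
    simp [Matrix.mul_apply, Fin.sum_univ_two] <;> field_simp <;> ring
end

section
/- Let K be a field, g ≥ 1, let q₁, …, q_g ∈ K be pairwise distinct, p₁, …, p_g ∈ K, let P₂(λ) ∈ K[λ] be any polynomial and H₀, …, H_{g−1} ∈ K. Set ℓ(λ) := −P₂(λ) + Σ_{k=0}^{g−1} H_kλ^{k} − Σ_{j=1}^{g} pⱼ/(λ−qⱼ), β(λ) := Π_{j=1}^{g}(λ−qⱼ), Q(λ) := −Σ_{i=1}^{g} pᵢ·Π_{j≠i}(λ−qⱼ)/(qᵢ−qⱼ), and let L̂(λ) be the 2×2 matrix over K(λ) with entries L̂₁₁ = −Q, L̂₁₂ = β, L̂₂₂ = Q, L̂₂₁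 = ∂_λ(Q/β) + ℓ/β − Q²/β. Then det L̂(λ) = −ℓ(λ) + L̂₁₂(λ)·∂_λ(L̂₁₁(λ)/L̂₁₂(λ)), and explicitly: det L̂(λ) = P₂(λ) − Σ_{k=0}^{g−1} H_kλ^{k} + Σ_{j=1}^{g} pⱼ/(λ−qⱼ) − Σ_{i=1}^{g} (pᵢ/(λ−qᵢ))·Π_{k≠i}(λ−q_k)/(qᵢ−q_k), as identities in K(λ). -/
theorem rfDeriv_div {K : Type*} [Field K] (a b : Polynomial K) (hb : b ≠ 0) :
    rfDeriv (algebraMap (Polynomial K) (RatFunc K) a / algebraMap (Polynomial K) (RatFunc K) b)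
    = (algebraMap (Polynomial K) (RatFunc K) (Polynomial.derivative a)
      * algebraMap (Polynomial K) (RatFunc K) b
    - algebraMap (Polynomial K) (RatFunc K) a
      * algebraMap (Polynomial K) (RatFunc K) (Polynomial.derivative b))
    / (algebraMap (Polynomial K) (RatFunc K) b) ^ 2 := by
  set f := algebraMap (Polynomial K) (RatFunc K) a / algebraMap (Polynomial K) (RatFunc K) b with hf
  have hd : f.denom ≠ 0 := f.denom_ne_zero
  have hb' : algebraMap (Polynomial K) (RatFunc K) b ≠ 0 := by
    simpa using hb
  have hd' : algebraMap (Polynomial K) (RatFunc K) f.denom ≠ 0 := by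
    simpa using hd
  have h1 : a * f.denom = f.num * b := by
    apply IsFractionRing.injective (Polynomial K) (RatFunc K)
    have h := f.num_div_denom
    conv_rhs at h => rw [hf]
    rw [div_eq_div_iff hd' hb'] at h
    simp only [map_mul]
    exact h.symm
  have h2 := congrArg Polynomial.derivative h1
  simp only [Polynomial.derivative_mul] at h2
  unfold rfDeriv
  rw [div_eq_div_iff (pow_ne_zero _ hd') (pow_ne_zero _ hb')]
  simp only [← map_mul, ← map_sub, ← map_pow]
  congr 1
  linear_combination (-f.denom * b) * h2 + (b * Polynomial.derivative f.denom + f.denom * Polynomial.derivative b) * h1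

theorem rfDeriv_add {K : Type*} [Field K] (f g : RatFunc K) :
    rfDeriv (f + g) = rfDeriv f + rfDeriv g := by
  have hf : algebraMap (Polynomial K) (RatFunc K) f.denom ≠ 0 := by
    simpa using f.denom_ne_zero
  have hg : algebraMap (Polynomial K) (RatFunc K) g.denom ≠ 0 := by
    simpa using g.denom_ne_zero
  have h : f + g = algebraMap (Polynomial K) (RatFunc K) (f.num * g.denom + f.denom * g.num)
      / algebraMap (Polynomial K) (RatFunc K) (f.denom * g.denom) := by
    simp only [map_mul, map_add]
    rw [← div_add_div _ _ hf hg, f.num_div_denom, g.num_div_denom]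
  rw [h, rfDeriv_div _ _ (mul_ne_zero f.denom_ne_zero g.denom_ne_zero)]
  unfold rfDeriv
  simp only [Polynomial.derivative_mul, map_mul, map_add]
  field_simp
  ring

theorem rfDeriv_zero {K : Type*} [Field K] : rfDeriv (0 : RatFunc K) = 0 := by
  simp [rfDeriv]

theorem rfDeriv_neg {K : Type*} [Field K] (f : RatFunc K) : rfDeriv (-f) = - rfDeriv f := by
  have h := rfDeriv_add (-f) f
  rw [neg_add_cancel, rfDeriv_zero] at h
  exact eq_neg_of_add_eq_zero_left h.symm

theorem rfDeriv_sum {K : Type*} [Field K] {ι : Type*} (s : Finset ι) (f : ι → RatFunc K) :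
    rfDeriv (∑ i ∈ s, f i) = ∑ i ∈ s, rfDeriv (f i) := by
  classical
  induction s using Finset.induction_on with
  | empty => simp [rfDeriv_zero]
  | insert a s ha ih => rw [Finset.sum_insert ha, Finset.sum_insert ha, rfDeriv_add, ih]

theorem X_sub_C_ne' {K : Type*} [Field K] (q : K) : (RatFunc.X - RatFunc.C q : RatFunc K) ≠ 0 := by
  have : (RatFunc.X - RatFunc.C q : RatFunc K)
      = algebraMap (Polynomial K) (RatFunc K) (Polynomial.X - Polynomial.C q) := by simp
  rw [this]
  exact RatFunc.algebraMap_ne_zero (Polynomial.X_sub_C_ne_zero q)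

theorem rfDeriv_simple {K : Type*} [Field K] (c q : K) :
    rfDeriv (RatFunc.C c / (RatFunc.X - RatFunc.C q))
      = - (RatFunc.C c / (RatFunc.X - RatFunc.C q) ^ 2) := by
  have h := rfDeriv_div (Polynomial.C c) (Polynomial.X - Polynomial.C q)
    (Polynomial.X_sub_C_ne_zero q)
  simp only [map_sub, RatFunc.algebraMap_X, RatFunc.algebraMap_C, Polynomial.derivative_C,
    Polynomial.derivative_X, map_zero, map_one, sub_zero, zero_mul, mul_one, zero_sub] at h
  rw [h, neg_div]

/-- **Determinant of the geometric Lax matrix (equations `Equivalence` and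
`ExpressionDethatL`).**  With `ℓ(λ) = -P₂(λ) + Σ_k H_k λ^k - Σⱼ pⱼ/(λ-qⱼ)`,
`β(λ) = Π(λ-qⱼ)` and `Q` the Lagrange polynomial, the matrix
`L̂ = !![-Q, β; ∂_λ(Q/β) + ℓ/β - Q²/β, Q]` satisfies
`det L̂ = -ℓ + L̂₁₂ ∂_λ(L̂₁₁/L̂₁₂)` and explicitly
`det L̂ = P₂ - Σ_k H_k λ^k + Σⱼ pⱼ/(λ-qⱼ) - Σᵢ (pᵢ/(λ-qᵢ)) Π_{k≠i}(λ-q_k)/(qᵢ-q_k)`. -/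
theorem determinant_geometric_lax_matrix
    (K : Type*) [Field K] (g : ℕ) (hg : 1 ≤ g)
    (q : Fin g → K) (hq : Function.Injective q)
    (p : Fin g → K) (P2 : Polynomial K) (H : ℕ → K) :
    let ℓ : RatFunc K :=
      (-(algebraMap (Polynomial K) (RatFunc K) P2)
        + ∑ k ∈ Finset.range g, RatFunc.C (H k) * RatFunc.X ^ k
        - ∑ j : Fin g, RatFunc.C (p j) / (RatFunc.X - RatFunc.C (q j)))
    let β : RatFunc K := ∏ j : Fin g, (RatFunc.X - RatFunc.C (q j))
    let Q : RatFunc K :=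
      (-∑ i : Fin g, RatFunc.C (p i) * ∏ j ∈ Finset.univ.erase i,
        (RatFunc.X - RatFunc.C (q j)) / (RatFunc.C (q i) - RatFunc.C (q j)))
    let Lhat : Matrix (Fin 2) (Fin 2) (RatFunc K) :=
      !![-Q, β; rfDeriv (Q / β) + ℓ / β - Q ^ 2 / β, Q]
    Lhat.det = -ℓ + Lhat 0 1 * rfDeriv (Lhat 0 0 / Lhat 0 1)
      ∧ Lhat.det = algebraMap (Polynomial K) (RatFunc K) P2
          - ∑ k ∈ Finset.range g, RatFunc.C (H k) * RatFunc.X ^ k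
          + ∑ j : Fin g, RatFunc.C (p j) / (RatFunc.X - RatFunc.C (q j))
          - ∑ i : Fin g, (RatFunc.C (p i) / (RatFunc.X - RatFunc.C (q i)))
              * ∏ m ∈ Finset.univ.erase i,
                  (RatFunc.X - RatFunc.C (q m)) / (RatFunc.C (q i) - RatFunc.C (q m)) := by
  intro ℓ β Q Lhat
  have hβ : β ≠ 0 := Finset.prod_ne_zero_iff.mpr fun j _ => X_sub_C_ne' (q j)
  have hdet : Lhat.det = -ℓ - β * rfDeriv (Q / β) := by
    simp only [Lhat, Matrix.det_fin_two_of]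
    field_simp
    ring
  have hQ : Q / β = -∑ i : Fin g, RatFunc.C (p i * ∏ j ∈ Finset.univ.erase i, (q i - q j)⁻¹)
      / (RatFunc.X - RatFunc.C (q i)) := by
    simp only [Q]
    rw [neg_div, Finset.sum_div]
    congr 1
    refine Finset.sum_congr rfl fun i _ => ?_
    have hi := X_sub_C_ne' (q i)
    rw [div_eq_div_iff hβ hi]
    simp only [β]
    rw [← Finset.mul_prod_erase Finset.univ _ (Finset.mem_univ i)]
    simp only [div_eq_mul_inv, Finset.prod_mul_distrib, map_mul, map_prod, map_inv₀, map_sub]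
    ring
  constructor
  · rw [hdet]
    have : Lhat 0 0 / Lhat 0 1 = -(Q / β) := by simp [Lhat, neg_div]
    rw [this, rfDeriv_neg]
    simp [Lhat, sub_eq_add_neg]
  · have key : β * rfDeriv (Q / β) = ∑ i : Fin g, (RatFunc.C (p i) / (RatFunc.X - RatFunc.C (q i)))
              * ∏ m ∈ Finset.univ.erase i,
                  (RatFunc.X - RatFunc.C (q m)) / (RatFunc.C (q i) - RatFunc.C (q m)) := by
      rw [hQ, rfDeriv_neg, rfDeriv_sum, ← Finset.sum_neg_distrib, Finset.mul_sum]
      refine Finset.sum_congr rfl fun i _ => ?_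
      have hi := X_sub_C_ne' (q i)
      rw [rfDeriv_simple, neg_neg]
      simp only [β]
      rw [← Finset.mul_prod_erase Finset.univ _ (Finset.mem_univ i)]
      simp only [div_eq_mul_inv, Finset.prod_mul_distrib, map_mul, map_prod, map_inv₀, map_sub]
      field_simp
    rw [hdet, key]
    simp only [ℓ]
    ring
end

section
/- Let K be a commutative ring in which 2 is invertible, g ≥ 1, let x ∈ K, and let c₋₁ := x/2 and c₁, c₃, …, c_{2g+1} ∈ K with c_{2g+1} = 1. Suppose α₋₁, α₁, α₃, …, α_{2g+1} ∈ K satisfy: α_{2g+1} = 1; for every k ∈ [g+1, 2g], Σ_{m=k−g}^{g+1} α_{2m−1}·α_{2k−2m+1} = Σ_{i=k−g}^{g+1} c_{2i−1}·c_{2k−2i+1}; and Σ_{m=0}^{g+1} α_{2m−1}·α_{2g−2m+1} = Σ_{i=1}^{g} c_{2i−1}·c_{2g−2i+1} + x. Then α_{2m−1} = c_{2m−1} for every m ∈ [0, g]; in particular α₋₁ = x/2. -/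
theorem split_aux {K : Type*} [CommRing K] (g j : ℕ) (hj : j ≤ g) (f : ℕ → K) (hf : f (g + 1) = 1) :
    (∑ m ∈ Finset.Icc j (g + 1), f m * f (g + j + 1 - m))
      = 2 * f j + ∑ m ∈ Finset.Icc (j + 1) g, f m * f (g + j + 1 - m) := by
  have h : Finset.Icc j (g + 1) = insert j (insert (g + 1) (Finset.Icc (j + 1) g)) := by
    ext a
    simp only [Finset.mem_Icc, Finset.mem_insert]
    omega
  rw [h, Finset.sum_insert, Finset.sum_insert]
  · have h1 : g + j + 1 - j = g + 1 := by omega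
    have h2 : g + j + 1 - (g + 1) = j := by omega
    rw [h1, h2, hf]
    ring
  · simp
  · simp only [Finset.mem_Icc, Finset.mem_insert]
    omega

/-- **Identification of the eigenvalue expansion coefficients with the times
(equations `Identification2`/`SolIDentification`).**  Here `α m` represents
`α_{2m-1}` and `c m` represents `c_{2m-1}` (`m ∈ [0, g+1]`), with
`c 0 = c_{-1} = x/2` and `c (g+1) = c_{2g+1} = 1`.  If `α (g+1) = 1`, the
quadratic relations hold for every `k ∈ [g+1, 2g]`, and the `λ^g`-relation
holds, then `α m = c m` for every `m ∈ [0, g]`; in particular `α₋₁ = x/2`. -/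
theorem identification_eigenvalue_coefficients
    (K : Type*) [CommRing K] [Invertible (2 : K)] (g : ℕ) (hg : 1 ≤ g)
    (x : K) (c α : ℕ → K)
    (hc0 : c 0 = ⅟(2 : K) * x) (hctop : c (g + 1) = 1)
    (hαtop : α (g + 1) = 1)
    (hmid : ∀ k ∈ Finset.Icc (g + 1) (2 * g),
      (∑ m ∈ Finset.Icc (k - g) (g + 1), α m * α (k + 1 - m))
        = ∑ i ∈ Finset.Icc (k - g) (g + 1), c i * c (k + 1 - i))
    (hlow : (∑ m ∈ Finset.range (g + 2), α m * α (g + 1 - m))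
        = (∑ i ∈ Finset.Icc 1 g, c i * c (g + 1 - i)) + x) :
    (∀ m ≤ g, α m = c m) ∧ α 0 = ⅟(2 : K) * x := by
  have key : ∀ j ≤ g, (∑ m ∈ Finset.Icc j (g + 1), α m * α (g + j + 1 - m))
      = ∑ m ∈ Finset.Icc j (g + 1), c m * c (g + j + 1 - m) := by
    intro j hj
    rcases Nat.eq_zero_or_pos j with rfl | hpos
    · rw [split_aux g 0 hj c hctop, hc0, mul_invOf_cancel_left]
      have h : Finset.Icc 0 (g + 1) = Finset.range (g + 2) := by
        ext a
        simp only [Finset.mem_Icc, Finset.mem_range]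
        omega
      rw [h]
      simp only [Nat.add_zero, Nat.zero_add]
      rw [hlow, add_comm]
    · have := hmid (g + j) (by rw [Finset.mem_Icc]; omega)
      rwa [Nat.add_sub_cancel_left] at this
  have main : ∀ d m : ℕ, m ≤ g → g - m = d → α m = c m := by
    intro d
    induction d using Nat.strong_induction_on with
    | _ d ih =>
      intro m hm hd
      have h := key m hm
      rw [split_aux g m hm α hαtop, split_aux g m hm c hctop] at h
      have hs : (∑ i ∈ Finset.Icc (m + 1) g, α i * α (g + m + 1 - i))
          = ∑ i ∈ Finset.Icc (m + 1) g, c i * c (g + m + 1 - i) := by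
        refine Finset.sum_congr rfl fun i hi => ?_
        rw [Finset.mem_Icc] at hi
        rw [ih (g - i) (by omega) i (by omega) rfl,
          ih (g - (g + m + 1 - i)) (by omega) (g + m + 1 - i) (by omega) rfl]
      rw [hs] at h
      have h2 := congrArg (fun t => ⅟(2 : K) * t) (add_right_cancel h)
      simpa only [invOf_mul_cancel_left] using h2
  exact ⟨fun m hm => main _ m hm rfl, (main _ 0 (Nat.zero_le g) rfl).trans hc0⟩
end
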